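/- Let p ∈ (3/2, 9/2] and r ∈ [1, 2p') be real exponents, where p' = p/(p−1). For every σ > 0 there exists a constant C_σ > 0 (depending only on σ, p, r) such that for every R > 0, every s, t with 3R/2 ≤ s < t ≤ 2R, every smooth vector field u : ℝ³ → ℝ³ and every smooth function θ : ℝ³ → ℝ, the quantity J₄ = (t−s)^{−1} ∫_{B_t∖B_s} |θ − θ̄_R|² |u| dx satisfies J₄ ≤ σ ‖θ − θ̄_R‖²_{L^6(B_t∖B_R)} + C_σ (t−s)^{−(6−r)p'/((3−p')r)} ‖u‖_{L^p(B_{2R}∖B_R)}^{(6−r)p'/((3−p')r)} ‖θ − θ̄_R‖²_{L^r(B_{2R}∖B_R)} (the inequality interpreted in the extended nonnegative reals). -/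

import Mathlib

/-!
Write `q = p / (p - 1)`, `F = |θ - θ̄_R|`, `U = |u|` and `m = (3 - q) r / (q (6 - r))`. The hypotheses
`q < 3` (from `p > 3/2`) and `r < 2q` give `0 < m < 1`. Three-function Hölder with weights
`1/p + 2m/r + (1-m)/3 = 1` yields `∫ F² U ≤ ‖U‖_p ‖F‖_r^{2m} ‖F‖_6^{2(1-m)}` (`holder_three`), and the
Young-type bound `A^m B^{1-m} ≤ σ B + σ^{1-1/m} A` (`young_sigma`) with
`A = ((t-s)⁻¹ ‖U‖_p)^{1/m} ‖F‖_r²`, `B = ‖F‖_6²` absorbs the `L⁶` factor. The exponent `1/m` is exactly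
the one in the claim, and all norms are monotone in the domain.
-/

open MeasureTheory Metric Filter
open scoped ENNReal NNReal

noncomputable section

/-- Euclidean `ℝ³`. -/
abbrev E3 := EuclideanSpace ℝ (Fin 3)

/-- The annulus `B_{2R} \ B_R` centered at the origin. -/
def Ann (R : ℝ) : Set E3 := ball (0 : E3) (2 * R) \ ball (0 : E3) R

/-- Mean value of `θ` over the annulus `B_{2R} \ B_R`. -/
def thetaBar (θ : E3 → ℝ) (R : ℝ) : ℝ := ⨍ x in Ann R, θ x

/-- `L^p` norm (with real exponent `p`) of `f` over the set `s`, valued in `ℝ≥0∞`. -/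
def LpS {F : Type*} [NormedAddCommGroup F] (f : E3 → F) (p : ℝ) (s : Set E3) : ℝ≥0∞ :=
  eLpNorm f (ENNReal.ofReal p) (volume.restrict s)

/-- Weighted Young inequality in the form `A^m B^(1-m) ≤ σ B + σ^(1-1/m) A`: the scalings of `A` and `B`
cancel on the left, and a weighted geometric mean is at most the sum. -/
lemma young_sigma (A B : ℝ≥0∞) (m σ : ℝ) (hm0 : 0 < m) (hm1 : m < 1) (hσ : 0 < σ) :
    A ^ m * B ^ (1 - m) ≤
      ENNReal.ofReal σ * B + ENNReal.ofReal (σ ^ (1 - 1 / m)) * A := by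
  have hn : 0 ≤ 1 - m := by linarith
  have key : A ^ m * B ^ (1 - m) =
      (ENNReal.ofReal (σ ^ (1 - 1 / m)) * A) ^ m * (ENNReal.ofReal σ * B) ^ (1 - m) := by
    have h1 : ENNReal.ofReal (σ ^ (1 - 1 / m)) ^ m * ENNReal.ofReal σ ^ (1 - m) = 1 := by
      rw [ENNReal.ofReal_rpow_of_pos (by positivity), ENNReal.ofReal_rpow_of_pos hσ,
        ← ENNReal.ofReal_mul (by positivity), ← Real.rpow_mul hσ.le, ← Real.rpow_add hσ]
      have : (1 - 1 / m) * m + (1 - m) = 0 := by field_simp; ring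
      rw [this]; simp
    rw [ENNReal.mul_rpow_of_nonneg _ _ hm0.le, ENNReal.mul_rpow_of_nonneg _ _ hn]
    calc A ^ m * B ^ (1 - m) = 1 * (A ^ m * B ^ (1 - m)) := (one_mul _).symm
      _ = _ := by rw [← h1]; ring
  rw [key]
  set X := ENNReal.ofReal (σ ^ (1 - 1 / m)) * A
  set Y := ENNReal.ofReal σ * B
  calc X ^ m * Y ^ (1 - m) ≤ (Y + X) ^ m * (Y + X) ^ (1 - m) := by
        gcongr
        · exact le_add_self
        · exact le_self_add
    _ = Y + X := by
        rw [← ENNReal.rpow_add_of_nonneg _ _ hm0.le hn]; simp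

lemma LpS_eq {F : Type*} [NormedAddCommGroup F] (f : E3 → F) {p : ℝ} (hp : 0 < p) (s : Set E3) :
    LpS f p s = (∫⁻ x in s, ‖f x‖ₑ ^ p) ^ (1 / p) := by
  unfold LpS
  rw [eLpNorm_eq_lintegral_rpow_enorm_toReal (by simpa using hp) ENNReal.ofReal_ne_top,
    ENNReal.toReal_ofReal hp.le]

lemma LpS_mono {F : Type*} [NormedAddCommGroup F] (f : E3 → F) (p : ℝ) {s t : Set E3}
    (h : s ⊆ t) : LpS f p s ≤ LpS f p t :=
  eLpNorm_mono_measure _ (Measure.restrict_mono h le_rfl)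

/-- Hölder for the product of `|u|`, `|f|^(2m)` and `|f|^(2(1-m))` with exponents `p`, `r/(2m)` and
`3/(1-m)`; `hw` says that these are conjugate. -/
lemma holder_three (u : E3 → E3) (f : E3 → ℝ) (hu : Continuous u) (hf : Continuous f)
    (S : Set E3) (p r m : ℝ) (hp : 0 < p) (hr : 0 < r) (hm0 : 0 < m) (hm1 : m < 1)
    (hw : 1 / p + 2 * m / r + (1 - m) / 3 = 1) :
    ∫⁻ x in S, ENNReal.ofReal (f x ^ 2 * ‖u x‖) ≤
      LpS u p S * (LpS f r S ^ 2) ^ m * (LpS f 6 S ^ 2) ^ (1 - m) := by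
  have hn : 0 < 1 - m := by linarith
  have H := ENNReal.lintegral_prod_norm_pow_le (μ := volume.restrict S) (Finset.univ : Finset (Fin 3))
    (f := ![fun x => ‖u x‖ₑ ^ p, fun x => ‖f x‖ₑ ^ r, fun x => ‖f x‖ₑ ^ (6 : ℝ)])
    (p := ![1 / p, 2 * m / r, (1 - m) / 3])
    (by
      intro i _
      fin_cases i
      · exact (hu.measurable.enorm.pow_const _).aemeasurable
      · exact (hf.measurable.enorm.pow_const _).aemeasurable
      · exact (hf.measurable.enorm.pow_const _).aemeasurable)
    (by simpa [Fin.sum_univ_three] using hw)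
    (by
      intro i _
      fin_cases i
      · change 0 ≤ 1 / p; positivity
      · change 0 ≤ 2 * m / r; positivity
      · change 0 ≤ (1 - m) / 3; positivity)
  simp only [Fin.prod_univ_three, Matrix.cons_val_zero, Matrix.cons_val_one, Matrix.cons_val] at H
  rw [LpS_eq u hp, LpS_eq f hr, LpS_eq f (by norm_num : (0 : ℝ) < 6)]
  simp only [← ENNReal.rpow_natCast, ← ENNReal.rpow_mul] at H ⊢
  convert H using 2
  · ext x
    have e1 : p * (1 / p) = 1 := by field_simp
    have e2 : r * (2 * m / r) = 2 * m := by field_simp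
    have e3 : 6 * ((1 - m) / 3) = 2 * (1 - m) := by ring
    rw [e1, e2, e3, ENNReal.rpow_one, mul_assoc,
      ← ENNReal.rpow_add_of_nonneg _ _ (by positivity) (by positivity)]
    have e4 : 2 * m + 2 * (1 - m) = (2 : ℕ) := by push_cast; ring
    rw [e4, ENNReal.rpow_natCast, ENNReal.ofReal_mul (by positivity), ofReal_norm,
      ← sq_abs, ENNReal.ofReal_pow (abs_nonneg _), ← Real.norm_eq_abs, ofReal_norm,
      mul_comm]
  · congr 2
    push_cast; ring
  · congr 1
    push_cast; ring

theorem J4_estimate_i (p r : ℝ) (hp : 3 / 2 < p ∧ p ≤ 9 / 2)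
    (hr : 1 ≤ r ∧ r < 2 * (p / (p - 1))) :
    ∀ σ : ℝ, 0 < σ → ∃ Cσ : ℝ, 0 < Cσ ∧
      ∀ R s t : ℝ, 0 < R → 3 * R / 2 ≤ s → s < t → t ≤ 2 * R →
      ∀ u : E3 → E3, ∀ θ : E3 → ℝ, ContDiff ℝ (⊤ : ℕ∞) u → ContDiff ℝ (⊤ : ℕ∞) θ →
        ENNReal.ofReal ((t - s)⁻¹) *
          ∫⁻ x in ball (0 : E3) t \ ball (0 : E3) s,
            ENNReal.ofReal ((θ x - thetaBar θ R) ^ 2 * ‖u x‖)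
        ≤ ENNReal.ofReal σ * LpS (fun x => θ x - thetaBar θ R) 6 (ball (0 : E3) t \ ball (0 : E3) R) ^ 2
          + ENNReal.ofReal Cσ * ENNReal.ofReal ((t - s) ^ (-((6 - r) * (p / (p - 1)) / ((3 - (p / (p - 1))) * r)))) *
              LpS u p (Ann R) ^ ((6 - r) * (p / (p - 1)) / ((3 - (p / (p - 1))) * r)) * LpS (fun x => θ x - thetaBar θ R) r (Ann R) ^ 2 := by
  intro σ hσ
  obtain ⟨hp1, hp2⟩ := hp
  obtain ⟨hr1, hr2⟩ := hr
  have hpq : 1 / p = 1 - 1 / (p / (p - 1)) := by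
    have : p - 1 ≠ 0 := by linarith
    have : p ≠ 0 := by linarith
    field_simp; ring
  have hq0 : 0 < p / (p - 1) := div_pos (by linarith) (by linarith)
  have hq3 : p / (p - 1) < 3 := by rw [div_lt_iff₀ (by linarith)]; linarith
  generalize p / (p - 1) = q at *
  have h3q : 0 < 3 - q := by linarith
  have h6r : 0 < 6 - r := by linarith
  have hr0 : 0 < r := by linarith
  have hp0 : 0 < p := by linarith
  obtain ⟨m, hm⟩ : ∃ m, m = (3 - q) * r / (q * (6 - r)) := ⟨_, rfl⟩
  have hm0 : 0 < m := by rw [hm]; positivity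
  have hm1 : m < 1 := by rw [hm, div_lt_one (by positivity)]; nlinarith
  have hk : (6 - r) * q / ((3 - q) * r) = 1 / m := by rw [hm, one_div_div]; ring
  have hw : 1 / p + 2 * m / r + (1 - m) / 3 = 1 := by
    rw [hpq, hm]; field_simp; ring
  rw [hk]
  refine ⟨σ ^ (1 - 1 / m), by positivity, ?_⟩
  intro R s t hR hs hst ht u θ hu hθ
  set f : E3 → ℝ := fun x => θ x - thetaBar θ R with hf
  have hfc : Continuous f := hθ.continuous.sub continuous_const
  set S := ball (0 : E3) t \ ball (0 : E3) s
  have hS1 : S ⊆ ball (0 : E3) t \ ball (0 : E3) R :=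
    Set.sdiff_subset_sdiff_right (ball_subset_ball (by linarith))
  have hS2 : S ⊆ Ann R := hS1.trans (Set.sdiff_subset_sdiff_left (ball_subset_ball ht))
  have hts : 0 < t - s := by linarith
  have hn : 0 ≤ 1 - m := by linarith
  set τ := ENNReal.ofReal ((t - s)⁻¹) with hτ
  have hτk : ENNReal.ofReal ((t - s) ^ (-(1 / m))) = τ ^ (1 / m) := by
    rw [hτ, ENNReal.ofReal_rpow_of_pos (by positivity), Real.rpow_neg hts.le,
      Real.inv_rpow hts.le]
  rw [hτk]
  have Y := young_sigma ((τ * LpS u p (Ann R)) ^ (1 / m) * LpS f r (Ann R) ^ 2)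
    (LpS f 6 (ball (0 : E3) t \ ball (0 : E3) R) ^ 2) m σ hm0 hm1 hσ
  rw [ENNReal.mul_rpow_of_nonneg _ _ hm0.le, ← ENNReal.rpow_mul, one_div_mul_cancel hm0.ne',
    ENNReal.rpow_one, ENNReal.mul_rpow_of_nonneg _ _ (by positivity : 0 ≤ 1 / m)] at Y
  calc τ * ∫⁻ x in S, ENNReal.ofReal (f x ^ 2 * ‖u x‖)
      ≤ τ * (LpS u p S * (LpS f r S ^ 2) ^ m * (LpS f 6 S ^ 2) ^ (1 - m)) := by
        gcongr
        exact holder_three u f hu.continuous hfc S p r m hp0 hr0 hm0 hm1 hw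
    _ ≤ τ * (LpS u p (Ann R) * (LpS f r (Ann R) ^ 2) ^ m *
          (LpS f 6 (ball (0 : E3) t \ ball (0 : E3) R) ^ 2) ^ (1 - m)) := by
        gcongr
        · exact LpS_mono _ _ hS2
        · exact LpS_mono _ _ hS2
        · exact LpS_mono _ _ hS1
    _ = τ * LpS u p (Ann R) * (LpS f r (Ann R) ^ 2) ^ m *
          (LpS f 6 (ball (0 : E3) t \ ball (0 : E3) R) ^ 2) ^ (1 - m) := by ring
    _ ≤ _ := Y
    _ = _ := by ring
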